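/- arXiv:2006.10129 — 2 statements merged into one kernel-verified Lean document; each statement's English description precedes it below -/
import Mathlib

section
/- Let (Ω, ℱ, P) be a probability space with a filtration 𝒢_0 ⊆ 𝒢_1 ⊆ … ⊆ 𝒢_T, let F be a finite index set with ln|F| ≥ 1, let p ∈ (0,1], and for each f ∈ F let X_1^f, …, X_T^f : Ω → {0,1} be random variables such that X_t^f is 𝒢_t-measurable and E[X_t^f ∣ 𝒢_{t−1}] ≤ p almost surely for every t and every f ∈ F. If T p ≥ √(ln|F|), then E[max_{f ∈ F} Σ_{t=1}^T X_t^f] ≤ 3 T p √(ln|F|). -/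
open MeasureTheory

/-!
This is the exponential-moment (Chernoff) method. By convexity `exp (c x) ≤ 1 + (exp c - 1) x` on
`[0, 1]`, so conditioning on the past shows that each step of a process with conditional mean at
most `p` multiplies the moment generating function at `c` by at most
`1 + (exp c - 1) p ≤ exp ((exp c - 1) p)`. Jensen's inequality and a union bound over the class
give `E[max] ≤ (log |F| + (exp c - 1) T p) / c`. Take `c = 1`: both `log |F|` and `T p` are at most
`T p √(log |F|)`, and `1 + (e - 1) = e < 3`.
-/

open ProbabilityTheory Real

section ExponentialMoments

variable {Ω : Type*} {m mΩ : MeasurableSpace Ω} {μ : Measure Ω}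

theorem exp_mul_le_one_add_mul_of_mem_Icc (c : ℝ) {x : ℝ} (hx : x ∈ Set.Icc 0 1) :
    exp (c * x) ≤ 1 + (exp c - 1) * x := by
  have hconv := convexOn_exp.2 (Set.mem_univ 0) (Set.mem_univ c) (sub_nonneg.2 hx.2) hx.1
    (sub_add_cancel 1 x)
  simp only [smul_eq_mul, mul_zero, zero_add, exp_zero, mul_one] at hconv
  rw [mul_comm c x]
  linarith

theorem integral_mul_le_of_condExp_le (hm : m ≤ mΩ) [SigmaFinite (μ.trim hm)] {f g : Ω → ℝ} {p : ℝ}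
    (hf : StronglyMeasurable[m] f) (hf_nonneg : 0 ≤ f) (hf_int : Integrable f μ)
    (hfg : Integrable (f * g) μ) (hg : Integrable g μ) (hgp : μ[g | m] ≤ᵐ[μ] fun _ => p) :
    ∫ ω, f ω * g ω ∂μ ≤ p * ∫ ω, f ω ∂μ :=
  calc ∫ ω, f ω * g ω ∂μ = ∫ ω, (μ[f * g | m]) ω ∂μ := (integral_condExp hm).symm
    _ ≤ ∫ ω, p * f ω ∂μ := by
        refine integral_mono_ae integrable_condExp (hf_int.const_mul p) ?_
        filter_upwards [condExp_mul_of_stronglyMeasurable_left hf hfg hg, hgp] with ω hpull hle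
        rw [hpull, Pi.mul_apply, mul_comm]
        exact mul_le_mul_of_nonneg_right hle (hf_nonneg ω)
    _ = p * ∫ ω, f ω ∂μ := integral_const_mul p f

theorem mgf_add_le_of_condExp_le [IsFiniteMeasure μ] (hm : m ≤ mΩ) {S X : Ω → ℝ} {c p : ℝ}
    (hc : 0 ≤ c) (hS : StronglyMeasurable[m] S) (hS_int : Integrable (fun ω => exp (c * S ω)) μ)
    (hX : AEMeasurable X μ) (hX_mem : ∀ᵐ ω ∂μ, X ω ∈ Set.Icc 0 1)
    (hXp : μ[X | m] ≤ᵐ[μ] fun _ => p) :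
    mgf (fun ω => S ω + X ω) μ c ≤ exp ((exp c - 1) * p) * mgf S μ c := by
  set E : Ω → ℝ := fun ω => exp (c * S ω)
  have hE : StronglyMeasurable[m] E := continuous_exp.comp_stronglyMeasurable (hS.const_mul c)
  have hX_norm : ∀ᵐ ω ∂μ, ‖X ω‖ ≤ 1 := by
    filter_upwards [hX_mem] with ω hω
    rw [norm_of_nonneg hω.1]
    exact hω.2
  have hEX : Integrable (fun ω => E ω * X ω) μ := hS_int.mul_bdd hX.aestronglyMeasurable hX_norm
  have hmean : ∫ ω, E ω * X ω ∂μ ≤ p * ∫ ω, E ω ∂μ :=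
    integral_mul_le_of_condExp_le hm hE (fun ω => (exp_pos _).le) hS_int hEX
      (.of_mem_Icc 0 1 hX hX_mem) hXp
  have hexp_c : 0 ≤ exp c - 1 := sub_nonneg.2 (one_le_exp hc)
  calc mgf (fun ω => S ω + X ω) μ c
      ≤ ∫ ω, E ω + (exp c - 1) * (E ω * X ω) ∂μ := by
        refine integral_mono_of_nonneg (.of_forall fun ω => (exp_pos _).le)
          (hS_int.add (hEX.const_mul _)) ?_
        filter_upwards [hX_mem] with ω hω
        calc exp (c * (S ω + X ω)) = E ω * exp (c * X ω) := by rw [mul_add, exp_add]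
          _ ≤ E ω * (1 + (exp c - 1) * X ω) := by
              gcongr
              exact exp_mul_le_one_add_mul_of_mem_Icc c hω
          _ = E ω + (exp c - 1) * (E ω * X ω) := by ring
    _ = mgf S μ c + (exp c - 1) * ∫ ω, E ω * X ω ∂μ := by
        rw [integral_add hS_int (hEX.const_mul _), integral_const_mul, mgf]
    _ ≤ mgf S μ c + (exp c - 1) * (p * mgf S μ c) := by gcongr; exact hmean
    _ = ((exp c - 1) * p + 1) * mgf S μ c := by ring
    _ ≤ exp ((exp c - 1) * p) * mgf S μ c :=
        mul_le_mul_of_nonneg_right (add_one_le_exp _) mgf_nonneg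

end ExponentialMoments

section AdaptedSums

variable {Ω : Type*} {mΩ : MeasurableSpace Ω} {P : Measure Ω} {ℱ : Filtration ℕ mΩ} {n : ℕ}

theorem stronglyMeasurable_sum_Icc_of_adapted {X : ℕ → Ω → ℝ}
    (hX : ∀ t ∈ Finset.Icc 1 n, StronglyMeasurable[ℱ t] (X t)) :
    StronglyMeasurable[ℱ n] fun ω => ∑ t ∈ Finset.Icc 1 n, X t ω :=
  Finset.stronglyMeasurable_fun_sum _ fun t ht => (hX t ht).mono (ℱ.mono (Finset.mem_Icc.1 ht).2)

theorem ae_sum_mem_Icc_zero_card {ι : Type*} {s : Finset ι} {X : ι → Ω → ℝ}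
    (hX : ∀ i ∈ s, ∀ᵐ ω ∂P, X i ω ∈ Set.Icc 0 1) :
    ∀ᵐ ω ∂P, ∑ i ∈ s, X i ω ∈ Set.Icc 0 (s.card : ℝ) := by
  filter_upwards [(Filter.eventually_all_finset s).2 hX] with ω hω
  refine ⟨Finset.sum_nonneg fun i hi => (hω i hi).1, ?_⟩
  simpa using Finset.sum_le_sum fun i hi => (hω i hi).2

theorem mgf_sum_Icc_le_of_condExp_le [IsProbabilityMeasure P] {X : ℕ → Ω → ℝ} {p : ℕ → ℝ} {c : ℝ}
    (hc : 0 ≤ c) (hX : ∀ t ∈ Finset.Icc 1 n, StronglyMeasurable[ℱ t] (X t))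
    (hX_mem : ∀ t ∈ Finset.Icc 1 n, ∀ᵐ ω ∂P, X t ω ∈ Set.Icc 0 1)
    (hXp : ∀ t ∈ Finset.Icc 1 n, P[X t | ℱ (t - 1)] ≤ᵐ[P] fun _ => p t) :
    mgf (fun ω => ∑ t ∈ Finset.Icc 1 n, X t ω) P c
      ≤ exp ((exp c - 1) * ∑ t ∈ Finset.Icc 1 n, p t) := by
  induction n with
  | zero => simp [mgf]
  | succ n ih =>
    have hsub : Finset.Icc 1 n ⊆ Finset.Icc 1 (n + 1) := Finset.Icc_subset_Icc_right n.le_succ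
    have hlast : n + 1 ∈ Finset.Icc 1 (n + 1) := Finset.right_mem_Icc.2 n.succ_pos
    have hS := stronglyMeasurable_sum_Icc_of_adapted fun t ht => hX t (hsub ht)
    have hS_int := integrable_exp_mul_of_mem_Icc (t := c) (hS.mono (ℱ.le n)).measurable.aemeasurable
      (ae_sum_mem_Icc_zero_card fun t ht => hX_mem t (hsub ht))
    have hstep := mgf_add_le_of_condExp_le (ℱ.le n) hc hS hS_int
      ((hX _ hlast).mono (ℱ.le _)).measurable.aemeasurable (hX_mem _ hlast) (hXp _ hlast)
    simp only [Finset.sum_Icc_succ_top n.succ_pos, mul_add, add_comm _ ((exp c - 1) * p (n + 1)),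
      exp_add]
    exact hstep.trans <| mul_le_mul_of_nonneg_left
      (ih (fun t ht => hX t (hsub ht)) (fun t ht => hX_mem t (hsub ht))
        (fun t ht => hXp t (hsub ht))) (exp_pos _).le

end AdaptedSums

section Maximum

variable {Ω ι : Type*} {mΩ : MeasurableSpace Ω} {P : Measure Ω} {s : Finset ι}

theorem integrable_sup' (hs : s.Nonempty) {Y : ι → Ω → ℝ} (hY : ∀ i ∈ s, Integrable (Y i) P) :
    Integrable (fun ω => s.sup' hs fun i => Y i ω) P := by
  simp only [← Finset.sup'_apply hs Y]
  exact Finset.sup'_induction hs Y (p := (Integrable · P)) (fun _ hf _ hg => hf.sup hg) hY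

theorem exp_mul_sup'_le_sum (hs : s.Nonempty) (y : ι → ℝ) (c : ℝ) :
    exp (c * s.sup' hs y) ≤ ∑ i ∈ s, exp (c * y i) := by
  obtain ⟨i, hi, hmax⟩ := Finset.exists_mem_eq_sup' hs y
  rw [hmax]
  exact Finset.single_le_sum (f := fun i => exp (c * y i)) (fun _ _ => (exp_pos _).le) hi

variable [IsProbabilityMeasure P]

theorem exp_mul_integral_sup'_le_sum_mgf (hs : s.Nonempty) {Y : ι → Ω → ℝ} {c : ℝ}
    (hY : ∀ i ∈ s, Integrable (Y i) P)
    (hY_exp : ∀ i ∈ s, Integrable (fun ω => exp (c * Y i ω)) P) :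
    exp (c * ∫ ω, s.sup' hs (fun i => Y i ω) ∂P) ≤ ∑ i ∈ s, mgf (Y i) P c := by
  set M : Ω → ℝ := fun ω => c * s.sup' hs fun i => Y i ω
  have hM : Integrable M P := (integrable_sup' hs hY).const_mul c
  have hsum : Integrable (fun ω => ∑ i ∈ s, exp (c * Y i ω)) P := integrable_finsetSum s hY_exp
  have hM_le : ∀ ω, exp (M ω) ≤ ∑ i ∈ s, exp (c * Y i ω) := fun ω => exp_mul_sup'_le_sum hs _ c
  have hM_exp : Integrable (fun ω => exp (M ω)) P :=
    hsum.mono' (continuous_exp.comp_aestronglyMeasurable hM.aestronglyMeasurable)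
      (.of_forall fun ω => by simpa using hM_le ω)
  calc exp (c * ∫ ω, s.sup' hs (fun i => Y i ω) ∂P) = exp (∫ ω, M ω ∂P) := by
        rw [integral_const_mul]
    _ ≤ ∫ ω, exp (M ω) ∂P :=
        convexOn_exp.map_integral_le continuous_exp.continuousOn isClosed_univ (by simp) hM hM_exp
    _ ≤ ∫ ω, ∑ i ∈ s, exp (c * Y i ω) ∂P := integral_mono hM_exp hsum hM_le
    _ = ∑ i ∈ s, mgf (Y i) P c := integral_finsetSum s hY_exp

theorem integral_sup'_le_of_mgf_le_exp (hs : s.Nonempty) {Y : ι → Ω → ℝ} {c K : ℝ} (hc : 0 < c)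
    (hY : ∀ i ∈ s, Integrable (Y i) P)
    (hY_exp : ∀ i ∈ s, Integrable (fun ω => exp (c * Y i ω)) P)
    (hK : ∀ i ∈ s, mgf (Y i) P c ≤ exp K) :
    ∫ ω, s.sup' hs (fun i => Y i ω) ∂P ≤ (log s.card + K) / c := by
  have hcard : (0 : ℝ) < s.card := by exact_mod_cast hs.card_pos
  rw [le_div_iff₀' hc, ← exp_le_exp]
  calc exp (c * ∫ ω, s.sup' hs (fun i => Y i ω) ∂P)
      ≤ ∑ i ∈ s, mgf (Y i) P c := exp_mul_integral_sup'_le_sum_mgf hs hY hY_exp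
    _ ≤ s.card • exp K := Finset.sum_le_card_nsmul s _ _ hK
    _ = exp (log s.card + K) := by rw [exp_add, exp_log hcard, nsmul_eq_mul]

theorem integral_sup'_sum_le_of_condExp_le (hs : s.Nonempty) {ℱ : Filtration ℕ mΩ} {n : ℕ}
    {X : ι → ℕ → Ω → ℝ} {p : ℕ → ℝ} {c : ℝ} (hc : 0 < c)
    (hX : ∀ i ∈ s, ∀ t ∈ Finset.Icc 1 n, StronglyMeasurable[ℱ t] (X i t))
    (hX_mem : ∀ i ∈ s, ∀ t ∈ Finset.Icc 1 n, ∀ᵐ ω ∂P, X i t ω ∈ Set.Icc 0 1)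
    (hXp : ∀ i ∈ s, ∀ t ∈ Finset.Icc 1 n, P[X i t | ℱ (t - 1)] ≤ᵐ[P] fun _ => p t) :
    ∫ ω, s.sup' hs (fun i => ∑ t ∈ Finset.Icc 1 n, X i t ω) ∂P
      ≤ (log s.card + (exp c - 1) * ∑ t ∈ Finset.Icc 1 n, p t) / c := by
  have hmeas : ∀ i ∈ s, AEMeasurable (fun ω => ∑ t ∈ Finset.Icc 1 n, X i t ω) P := fun i hi =>
    ((stronglyMeasurable_sum_Icc_of_adapted (hX i hi)).mono (ℱ.le n)).measurable.aemeasurable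
  have hmem := fun i hi => ae_sum_mem_Icc_zero_card (hX_mem i hi)
  exact integral_sup'_le_of_mgf_le_exp hs hc
    (fun i hi => .of_mem_Icc _ _ (hmeas i hi) (hmem i hi))
    (fun i hi => integrable_exp_mul_of_mem_Icc (hmeas i hi) (hmem i hi))
    (fun i hi => mgf_sum_Icc_le_of_condExp_le hc.le (hX i hi) (hX_mem i hi) (hXp i hi))

end Maximum

theorem add_exp_one_sub_one_mul_le {L a : ℝ} (hL : 1 ≤ L) (ha : √L ≤ a) :
    L + (exp 1 - 1) * a ≤ 3 * a * √L := by
  have hsqrt : 1 ≤ √L := one_le_sqrt.2 hL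
  have ha_nonneg : 0 ≤ a := (sqrt_nonneg L).trans ha
  calc L + (exp 1 - 1) * a = √L * √L + (exp 1 - 1) * (a * 1) := by
        rw [mul_self_sqrt (zero_le_one.trans hL), mul_one]
    _ ≤ a * √L + 2 * (a * √L) := by
        gcongr
        linarith [exp_one_lt_three]
    _ = 3 * a * √L := by ring

theorem maximal_inequality_adaptive_general
    {Ω : Type*} {mΩ : MeasurableSpace Ω} (P : Measure Ω) [IsProbabilityMeasure P]
    (T : ℕ) (ℱ : Filtration ℕ mΩ)
    {F : Type*} [Fintype F] [Nonempty F]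
    (hF : 1 ≤ log (Fintype.card F))
    (p : ℝ)
    (X : F → ℕ → Ω → ℝ)
    (hmem : ∀ f, ∀ t ∈ Finset.Icc 1 T, ∀ᵐ ω ∂P, X f t ω ∈ Set.Icc 0 1)
    (hmeas : ∀ f, ∀ t ∈ Finset.Icc 1 T, StronglyMeasurable[ℱ t] (X f t))
    (hcond : ∀ f, ∀ t ∈ Finset.Icc 1 T, P[X f t | ℱ (t - 1)] ≤ᵐ[P] fun _ => p)
    (hTp : √(log (Fintype.card F)) ≤ T * p) :
    ∫ ω, (Finset.univ.sup' Finset.univ_nonempty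
        fun f => ∑ t ∈ Finset.Icc 1 T, X f t ω) ∂P
      ≤ 3 * T * p * √(log (Fintype.card F)) := by
  have hmax := integral_sup'_sum_le_of_condExp_le Finset.univ_nonempty one_pos
    (fun f _ => hmeas f) (fun f _ => hmem f) (fun f _ => hcond f)
  simp only [Finset.card_univ, Finset.sum_const, Nat.card_Icc, Nat.add_sub_cancel, nsmul_eq_mul,
    div_one] at hmax
  rw [mul_assoc 3]
  exact hmax.trans (add_exp_one_sub_one_mul_le hF hTp)

/-- **Lemma 1 (maximal inequality for adaptive smoothed processes), explicit constant.**
For a finite family indexed by `F` with `ln |F| ≥ 1` of adapted `{0,1}`-valued processes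
with conditional success probabilities at most `p`, if `T p ≥ √(ln |F|)` then
`E[max_f Σ_t X_t^f] ≤ 3 T p √(ln |F|)`. -/
theorem maximal_inequality_adaptive
    {Ω : Type*} {mΩ : MeasurableSpace Ω} (P : Measure Ω) [IsProbabilityMeasure P]
    (T : ℕ) (𝒢 : ℕ → MeasurableSpace Ω)
    (hmono : ∀ i j, i ≤ j → 𝒢 i ≤ 𝒢 j)
    (hle : ∀ i, 𝒢 i ≤ mΩ)
    {F : Type*} [Fintype F] [Nonempty F]
    (hF : 1 ≤ Real.log (Fintype.card F))
    (p : ℝ) (hp0 : 0 < p) (hp1 : p ≤ 1)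
    (X : F → ℕ → Ω → ℝ)
    (hval : ∀ f, ∀ t ∈ Finset.Icc 1 T, ∀ ω, X f t ω = 0 ∨ X f t ω = 1)
    (hmeas : ∀ f, ∀ t ∈ Finset.Icc 1 T, Measurable[𝒢 t] (X f t))
    (hcond : ∀ f, ∀ t ∈ Finset.Icc 1 T, P[X f t | 𝒢 (t - 1)] ≤ᵐ[P] fun _ => p)
    (hTp : Real.sqrt (Real.log (Fintype.card F)) ≤ T * p) :
    ∫ ω, (Finset.univ.sup' Finset.univ_nonempty
        fun f => ∑ t ∈ Finset.Icc 1 T, X f t ω) ∂P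
      ≤ 3 * T * p * Real.sqrt (Real.log (Fintype.card F)) :=
  maximal_inequality_adaptive_general P T ⟨𝒢, fun i j => hmono i j, hle⟩ hF p X
    (fun f t ht => .of_forall fun ω => by rcases hval f t ht ω with h | h <;> simp [h])
    (fun f t ht => (hmeas f t ht).stronglyMeasurable) hcond hTp
end

section
/- Let X be a measurable space with measure μ, let k ≥ 1, let ε > 0, and let F_1, …, F_k be classes of measurable functions X → {0,1}. Suppose each F_i admits an ε-bracketing of size N_i with respect to μ. Then the class F_1 + F_2 + ⋯ + F_k = { x ↦ max(f_1(x), …, f_k(x)) : f_i ∈ F_i for each i } (pointwise unions) admits a (kε)-bracketing of size at most N_1 · N_2 ⋯ N_k with respect to μ. -/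
open MeasureTheory

/-- `B` is an `ε`-bracketing of the class `F` of measurable `{0,1}`-valued functions with
respect to the measure `μ`: every pair `(l, u) ∈ B` consists of measurable `{0,1}`-valued
functions with `l ≤ u` pointwise and `μ {x | l x ≠ u x} ≤ ε`, and every `f ∈ F` lies in
some bracket `[l, u]` of `B` pointwise. -/
def IsBracketing {X : Type*} [MeasurableSpace X] (μ : Measure X) (ε : ℝ)
    (F : Set (X → ℝ)) (B : Finset ((X → ℝ) × (X → ℝ))) : Prop :=
  (∀ lu ∈ B,
      Measurable lu.1 ∧ Measurable lu.2 ∧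
      (∀ x, lu.1 x = 0 ∨ lu.1 x = 1) ∧ (∀ x, lu.2 x = 0 ∨ lu.2 x = 1) ∧
      (∀ x, lu.1 x ≤ lu.2 x) ∧
      μ {x | lu.1 x ≠ lu.2 x} ≤ ENNReal.ofReal ε) ∧
  (∀ f ∈ F, ∃ lu ∈ B, (∀ x, lu.1 x ≤ f x) ∧ (∀ x, f x ≤ lu.2 x))

/-!
Taking pointwise maxima of one bracket from each class gives a bracket for the maxima of the
functions they contain. Where the maxima of the lower and upper ends differ, the two ends of some
chosen bracket differ, so the widths add up by the union bound. There is one such bracket for each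
choice, which gives the product of the sizes.
-/

theorem measure_iSup_ne_le_tsum {ι X α : Type*} [Countable ι] [SupSet α] [MeasurableSpace X]
    (μ : Measure X) (f g : ι → X → α) :
    μ {x | ⨆ i, f i x ≠ ⨆ i, g i x} ≤ ∑' i, μ {x | f i x ≠ g i x} := by
  have ne_subset : {x | ⨆ i, f i x ≠ ⨆ i, g i x} ⊆ ⋃ i, {x | f i x ≠ g i x} := by
    intro x iSup_ne
    obtain ⟨i, hi⟩ : ∃ i, f i x ≠ g i x := by
      by_contra! all_eq
      exact iSup_ne (iSup_congr all_eq)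
    exact Set.mem_iUnion.2 ⟨i, hi⟩
  exact (measure_mono ne_subset).trans (measure_iUnion_le _)

theorem ciSup_mem_of_finite {ι α : Type*} [Finite ι] [Nonempty ι]
    [ConditionallyCompleteLinearOrder α] {s : Set α} {f : ι → α} (hf : ∀ i, f i ∈ s) :
    ⨆ i, f i ∈ s := by
  obtain ⟨i, hi⟩ := exists_eq_ciSup_of_finite (f := f)
  exact hi ▸ hf i

/-- A single bracket `(l, u)` of width at most `δ`: an ordered pair of measurable `{0,1}`-valued
functions that differ on a set of measure at most `δ`. Widths are extended nonnegative
reals, like the values of `μ`. -/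
structure IsBracket {X : Type*} [MeasurableSpace X] (μ : Measure X) (δ : ENNReal)
    (l u : X → ℝ) : Prop where
  measurable_lower : Measurable l
  measurable_upper : Measurable u
  lower_mem : ∀ x, l x ∈ ({0, 1} : Set ℝ)
  upper_mem : ∀ x, u x ∈ ({0, 1} : Set ℝ)
  le : l ≤ u
  measure_ne_le : μ {x | l x ≠ u x} ≤ δ

theorem isBracketing_iff {X : Type*} [MeasurableSpace X] {μ : Measure X} {ε : ℝ}
    {F : Set (X → ℝ)} {B : Finset ((X → ℝ) × (X → ℝ))} :
    IsBracketing μ ε F B ↔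
      (∀ lu ∈ B, IsBracket μ (ENNReal.ofReal ε) lu.1 lu.2) ∧
        ∀ f ∈ F, ∃ lu ∈ B, lu.1 ≤ f ∧ f ≤ lu.2 := by
  refine and_congr_left' (forall₂_congr fun lu _ => ⟨?_, ?_⟩)
  · rintro ⟨hl, hu, hl01, hu01, hle, hμ⟩
    exact ⟨hl, hu, hl01, hu01, hle, hμ⟩
  · rintro ⟨hl, hu, hl01, hu01, hle, hμ⟩
    exact ⟨hl, hu, hl01, hu01, hle, hμ⟩

section FiniteSup

variable {ι X : Type*} [Fintype ι]

theorem IsBracket.iSup [Nonempty ι] [MeasurableSpace X] {μ : Measure X} {δ : ι → ENNReal}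
    {l u : ι → X → ℝ} (h : ∀ i, IsBracket μ (δ i) (l i) (u i)) :
    IsBracket μ (∑ i, δ i) (fun x => ⨆ i, l i x) (fun x => ⨆ i, u i x) where
  measurable_lower := .iSup fun i => (h i).measurable_lower
  measurable_upper := .iSup fun i => (h i).measurable_upper
  lower_mem x := ciSup_mem_of_finite fun i => (h i).lower_mem x
  upper_mem x := ciSup_mem_of_finite fun i => (h i).upper_mem x
  le x := Finite.ciSup_mono fun i => (h i).le x
  measure_ne_le :=
    calc μ {x | ⨆ i, l i x ≠ ⨆ i, u i x}
        ≤ ∑' i, μ {x | l i x ≠ u i x} := measure_iSup_ne_le_tsum μ l u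
      _ = ∑ i, μ {x | l i x ≠ u i x} := tsum_fintype _
      _ ≤ ∑ i, δ i := Finset.sum_le_sum fun i _ => (h i).measure_ne_le

open Classical in
/-- The brackets for pointwise maxima: for every choice of one bracket from each `B i`, the pair
consisting of the maximum of the lower ends and the maximum of the upper ends. -/
noncomputable def iSupBrackets (B : ι → Finset ((X → ℝ) × (X → ℝ))) :
    Finset ((X → ℝ) × (X → ℝ)) :=
  (Fintype.piFinset B).image fun p => (fun x => ⨆ i, (p i).1 x, fun x => ⨆ i, (p i).2 x)

variable {B : ι → Finset ((X → ℝ) × (X → ℝ))}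

theorem mem_iSupBrackets {lu : (X → ℝ) × (X → ℝ)} :
    lu ∈ iSupBrackets B ↔
      ∃ p : ι → (X → ℝ) × (X → ℝ), (∀ i, p i ∈ B i) ∧
        (fun x => ⨆ i, (p i).1 x, fun x => ⨆ i, (p i).2 x) = lu := by
  simp only [iSupBrackets, Finset.mem_image, Fintype.mem_piFinset]

theorem card_iSupBrackets_le : (iSupBrackets B).card ≤ ∏ i, (B i).card := by
  classical
  exact Finset.card_image_le.trans (Fintype.card_piFinset B).le

theorem exists_mem_iSupBrackets_le_le {f : ι → X → ℝ}
    (hf : ∀ i, ∃ lu ∈ B i, lu.1 ≤ f i ∧ f i ≤ lu.2) :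
    ∃ lu ∈ iSupBrackets B, lu.1 ≤ (fun x => ⨆ i, f i x) ∧ (fun x => ⨆ i, f i x) ≤ lu.2 := by
  choose p hp lower_le le_upper using hf
  exact ⟨_, mem_iSupBrackets.2 ⟨p, hp, rfl⟩,
    fun x => Finite.ciSup_mono fun i => lower_le i x,
    fun x => Finite.ciSup_mono fun i => le_upper i x⟩

theorem IsBracketing.iSup [Nonempty ι] [MeasurableSpace X] {μ : Measure X} {ε : ι → ℝ}
    (hε : ∀ i, 0 ≤ ε i) {F : ι → Set (X → ℝ)} (hB : ∀ i, IsBracketing μ (ε i) (F i) (B i)) :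
    IsBracketing μ (∑ i, ε i)
      {g | ∃ f : ι → X → ℝ, (∀ i, f i ∈ F i) ∧ g = fun x => ⨆ i, f i x} (iSupBrackets B) := by
  simp only [isBracketing_iff] at hB ⊢
  constructor
  · intro lu hlu
    obtain ⟨p, hp, rfl⟩ := mem_iSupBrackets.1 hlu
    rw [ENNReal.ofReal_sum_of_nonneg fun i _ => hε i]
    exact .iSup fun i => (hB i).1 (p i) (hp i)
  · rintro _ ⟨f, hf, rfl⟩
    exact exists_mem_iSupBrackets_le_le fun i => (hB i).2 (f i) (hf i)

end FiniteSup

theorem bracketing_kfold_union_general {ι X : Type*} [Fintype ι] [Nonempty ι]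
    [MeasurableSpace X] (μ : Measure X) {ε : ι → ℝ} (hε : ∀ i, 0 ≤ ε i) (F : ι → Set (X → ℝ))
    (N : ι → ℕ) (hN : ∀ i, ∃ B, IsBracketing μ (ε i) (F i) B ∧ B.card ≤ N i) :
    ∃ B, IsBracketing μ (∑ i, ε i)
        {g | ∃ f : ι → X → ℝ, (∀ i, f i ∈ F i) ∧ g = fun x => ⨆ i, f i x} B ∧
      B.card ≤ ∏ i, N i := by
  choose B hB hcard using hN
  exact ⟨iSupBrackets B, .iSup hε hB,
    card_iSupBrackets_le.trans (Finset.prod_le_prod' fun i _ => hcard i)⟩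

/-- **Theorem 4, union part (bracketing number of k-fold unions).**
If each class `F i` of measurable `{0,1}`-valued functions admits an `ε`-bracketing of size
`N i` with respect to `μ`, then the class of pointwise unions (maxima)
`x ↦ max (f 0 x, …, f (k-1) x)` admits a `(k ε)`-bracketing of size at most `∏ i, N i`. -/
theorem bracketing_kfold_union
    {X : Type*} [MeasurableSpace X] (μ : Measure X)
    (k : ℕ) (hk : 1 ≤ k) (ε : ℝ) (hε : 0 < ε)
    (F : Fin k → Set (X → ℝ))
    (hF : ∀ i, ∀ f ∈ F i, Measurable f ∧ ∀ x, f x = 0 ∨ f x = 1)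
    (N : Fin k → ℕ)
    (hN : ∀ i, ∃ B, IsBracketing μ ε (F i) B ∧ B.card = N i) :
    ∃ B, IsBracketing μ (k * ε)
        { g | ∃ f : Fin k → (X → ℝ), (∀ i, f i ∈ F i) ∧ g = fun x => ⨆ i, f i x } B ∧
      B.card ≤ ∏ i, N i := by
  have : Nonempty (Fin k) := ⟨⟨0, hk⟩⟩
  simpa using bracketing_kfold_union_general μ (fun _ => hε.le) F N
    fun i => (hN i).imp fun _ h => ⟨h.1, h.2.le⟩
end
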